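/- Let f : ℝ → ℝ be continuous, non-negative, and integrable, and define F(x) := ∫_ℝ (−(1/2)·sgn(x−y)·e^{−|x−y|}) f(y) dy. If there exist a, b ∈ ℝ with a < b such that f(x) = 0 for all x ∈ (a,b) and F(a) = F(b), then f(x) = 0 for all x ∈ ℝ. -/

import Mathlib

open MeasureTheory

/-!
The kernel `k(x) = -(1/2) sgn(x) e^{-|x|}` is strictly increasing on each side of its jump at `0`.
For `y` outside `[a, b]` the points `a - y < b - y` lie on the same side, so `k(a - y) < k(b - y)`.
In `F(b) - F(a) = ∫ (k(b - y) - k(a - y)) f(y) dy` the weight is thus positive wherever `f(y) ≠ 0`,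
so `F(a) = F(b)` forces `f = 0` almost everywhere, hence everywhere by continuity.
-/

theorem ae_eq_zero_of_integral_mul_nonpos {α : Type*} [MeasurableSpace α] {μ : Measure α}
    {w f : α → ℝ} (hf : 0 ≤ᵐ[μ] f) (hw : ∀ᵐ x ∂μ, f x ≠ 0 → 0 < w x)
    (hwf : Integrable (fun x => w x * f x) μ) (hle : ∫ x, w x * f x ∂μ ≤ 0) : f =ᵐ[μ] 0 := by
  have hwf_nonneg : 0 ≤ᵐ[μ] fun x => w x * f x := by
    filter_upwards [hf, hw] with x hfx hwx
    rcases eq_or_ne (f x) 0 with h | h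
    · simp [h]
    · exact mul_nonneg (hwx h).le hfx
  have hwf_zero := (integral_eq_zero_iff_of_nonneg_ae hwf_nonneg hwf).1
    (hle.antisymm (integral_nonneg_of_ae hwf_nonneg))
  filter_upwards [hw, hwf_zero] with x hwx hx
  by_contra h
  exact mul_ne_zero (hwx h).ne' h hx

theorem apply_sub_lt_apply_sub_of_notMem_Icc {G β : Type*} [AddCommGroup G] [LinearOrder G]
    [IsOrderedAddMonoid G] [Preorder β] {k : G → β} (hk_neg : StrictMonoOn k (Set.Iio 0))
    (hk_pos : StrictMonoOn k (Set.Ioi 0)) {a b y : G} (hab : a < b) (hy : y ∉ Set.Icc a b) :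
    k (a - y) < k (b - y) := by
  have hlt : a - y < b - y := sub_lt_sub_right hab y
  rcases lt_or_ge y a with hya | hay
  · have ha : 0 < a - y := sub_pos.2 hya
    exact hk_pos ha (ha.trans hlt) hlt
  · have hb : b - y < 0 := sub_neg.2 (lt_of_not_ge fun hyb => hy ⟨hay, hyb⟩)
    exact hk_neg (hlt.trans hb) hb hlt

theorem ch2_theorem32_line_general {μ : Measure ℝ} [NullSingletonClass μ] {k f : ℝ → ℝ}
    (hk_neg : StrictMonoOn k (Set.Iio 0)) (hk_pos : StrictMonoOn k (Set.Ioi 0))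
    (hf : 0 ≤ᵐ[μ] f) {a b : ℝ} (hab : a < b)
    (ha : Integrable (fun y => k (a - y) * f y) μ) (hb : Integrable (fun y => k (b - y) * f y) μ)
    (hvan : ∀ᵐ y ∂μ.restrict (Set.Ioo a b), f y = 0)
    (hle : ∫ y, k (b - y) * f y ∂μ ≤ ∫ y, k (a - y) * f y ∂μ) :
    f =ᵐ[μ] 0 := by
  have hvan_Icc : ∀ᵐ y ∂μ, y ∈ Set.Icc a b → f y = 0 := by
    rwa [restrict_Ioo_eq_restrict_Icc, ae_restrict_iff' measurableSet_Icc] at hvan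
  have hpos : ∀ᵐ y ∂μ, f y ≠ 0 → 0 < k (b - y) - k (a - y) := by
    filter_upwards [hvan_Icc] with y hy hfy
    exact sub_pos.2 (apply_sub_lt_apply_sub_of_notMem_Icc hk_neg hk_pos hab (mt hy hfy))
  refine ae_eq_zero_of_integral_mul_nonpos hf hpos ?_ ?_ <;> simp only [sub_mul]
  · exact hb.sub ha
  · rw [integral_sub hb ha]
    exact sub_nonpos.2 hle

/-- The derivative of the Green function `(1/2) e^{-|x|}` of the Helmholtz operator `1 - ∂ₓ²`,
with the value `0` assigned at the jump `x = 0`. -/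
noncomputable def helmholtzGreenDeriv (x : ℝ) : ℝ :=
  -(1 / 2) * Real.sign x * Real.exp (-|x|)

theorem helmholtzGreenDeriv_of_pos {x : ℝ} (hx : 0 < x) :
    helmholtzGreenDeriv x = -(1 / 2) * Real.exp (-x) := by
  rw [helmholtzGreenDeriv, Real.sign_of_pos hx, abs_of_pos hx, mul_one]

theorem helmholtzGreenDeriv_of_neg {x : ℝ} (hx : x < 0) :
    helmholtzGreenDeriv x = 1 / 2 * Real.exp x := by
  rw [helmholtzGreenDeriv, Real.sign_of_neg hx, abs_of_neg hx, neg_neg, neg_mul_neg, mul_one]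

theorem strictMonoOn_helmholtzGreenDeriv_Iio : StrictMonoOn helmholtzGreenDeriv (Set.Iio 0) := by
  intro x hx y hy hxy
  rw [helmholtzGreenDeriv_of_neg hx, helmholtzGreenDeriv_of_neg hy]
  gcongr

theorem strictMonoOn_helmholtzGreenDeriv_Ioi : StrictMonoOn helmholtzGreenDeriv (Set.Ioi 0) := by
  intro x hx y hy hxy
  rw [helmholtzGreenDeriv_of_pos hx, helmholtzGreenDeriv_of_pos hy, neg_mul, neg_mul]
  gcongr

theorem measurable_real_sign : Measurable Real.sign :=
  Measurable.ite measurableSet_Iio measurable_const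
    (Measurable.ite measurableSet_Ioi measurable_const measurable_const)

theorem measurable_helmholtzGreenDeriv : Measurable helmholtzGreenDeriv :=
  (measurable_real_sign.const_mul _).mul (by fun_prop)

theorem abs_helmholtzGreenDeriv_le (x : ℝ) : |helmholtzGreenDeriv x| ≤ 1 / 2 := by
  rcases lt_trichotomy x 0 with hx | rfl | hx
  · rw [helmholtzGreenDeriv_of_neg hx, abs_of_pos (by positivity)]
    linarith [Real.exp_le_one_iff.2 hx.le]
  · norm_num [helmholtzGreenDeriv]
  · rw [helmholtzGreenDeriv_of_pos hx, neg_mul, abs_neg, abs_of_pos (by positivity)]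
    linarith [Real.exp_le_one_iff.2 (neg_nonpos.2 hx.le)]

theorem integrable_helmholtzGreenDeriv_sub_mul {μ : Measure ℝ} {f : ℝ → ℝ} (hf : Integrable f μ)
    (x : ℝ) : Integrable (fun y => helmholtzGreenDeriv (x - y) * f y) μ :=
  hf.bdd_mul (c := 1 / 2)
    (measurable_helmholtzGreenDeriv.comp (measurable_id.const_sub x)).aestronglyMeasurable
    (ae_of_all _ fun y => abs_helmholtzGreenDeriv_le (x - y))

/-- **Theorem 3.2 (non-periodic case).** Let `f` be continuous, non-negative and integrable,
and `F(x) = ∫ g'(x-y) f(y) dy` with `g'(x) = -(1/2)sgn(x)e^{-|x|}`. If `f` vanishes on some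
interval `(a,b)` and `F(a) = F(b)`, then `f` vanishes identically. -/
theorem ch2_theorem32_line
    (f : ℝ → ℝ) (hf_cont : Continuous f) (hf_nonneg : ∀ x, 0 ≤ f x)
    (hf_int : Integrable f)
    (F : ℝ → ℝ)
    (hF : ∀ x, F x = ∫ y, (-(1/2) * Real.sign (x - y) * Real.exp (-|x - y|)) * f y)
    (a b : ℝ) (hab : a < b)
    (hvan : ∀ x ∈ Set.Ioo a b, f x = 0)
    (hFab : F a = F b) :
    ∀ x : ℝ, f x = 0 := by
  have hf_ae : f =ᵐ[volume] 0 :=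
    ch2_theorem32_line_general strictMonoOn_helmholtzGreenDeriv_Iio
      strictMonoOn_helmholtzGreenDeriv_Ioi (ae_of_all _ hf_nonneg) hab
      (integrable_helmholtzGreenDeriv_sub_mul hf_int a)
      (integrable_helmholtzGreenDeriv_sub_mul hf_int b)
      (ae_restrict_of_forall_mem measurableSet_Ioo hvan)
      ((hF b).symm.trans (hFab.symm.trans (hF a))).le
  exact congrFun ((hf_cont.ae_eq_iff_eq volume continuous_const).1 hf_ae)
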